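/- For every τ in the complex upper half-plane: (i) β(τ)·c(τ) = 4c(τ)³ + 1, and (ii) (α(τ)³ − 27)·(c(τ)³ + 1)·(8c(τ)³ − 1)² = 729·c(τ)³. -/

import Mathlib

open Complex

/-- The nome `q = exp(2πiτ)`. -/
noncomputable def nome (τ : ℂ) : ℂ := Complex.exp (2 * Real.pi * I * τ)

/-- Ramanujan's cubic continued fraction, as an infinite product:
`c(τ) = q^{1/3} ∏_{n≥1} (1-q^{6n-1})(1-q^{6n-5})/(1-q^{6n-3})²`. -/
noncomputable def c (τ : ℂ) : ℂ :=
  Complex.exp (2 * Real.pi * I * τ / 3) *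
    ∏' n : ℕ,
      ((1 - nome τ ^ (6 * (n + 1) - 1)) * (1 - nome τ ^ (6 * (n + 1) - 5)) /
        (1 - nome τ ^ (6 * (n + 1) - 3)) ^ 2)

/-- The Dedekind eta function `η(τ) = e^{πiτ/12} ∏_{n≥1} (1 - e^{2πinτ})`. -/
noncomputable def dedekindEta (τ : ℂ) : ℂ :=
  Complex.exp (Real.pi * I * τ / 12) *
    ∏' n : ℕ, (1 - Complex.exp (2 * Real.pi * I * (n + 1) * τ))

/-- `α(τ) = 3 + 27 η(9τ)³/η(τ)³`. -/
noncomputable def alpha (τ : ℂ) : ℂ :=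
  3 + 27 * dedekindEta (9 * τ) ^ 3 / dedekindEta τ ^ 3

/-- `β(τ) = 3 + η(τ/3)³/η(3τ)³`. -/
noncomputable def beta (τ : ℂ) : ℂ :=
  3 + dedekindEta (τ / 3) ^ 3 / dedekindEta (3 * τ) ^ 3

/-!
Write `t = q^(1/3)`, `v = c(τ)` and `E_k = (t^k; t^k)_∞`. Jacobi's triple product turns the
3-dissections of Ramanujan's series `φ(-t)` and `ψ(t)` into
`E₁² E₁₈ = E₂ E₉² (1 - 2v)` and `E₂² E₉ v = t E₁₈² E₁ (1 + v)`,
and eliminating `E₂` and `E₁₈` gives `E₁³ v = t E₉³ (1 + v) (1 - 2v)²`, which is (i). Replacing `t`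
by `ω t` with `ω³ = 1` replaces `v` by `ω v`, and the product of the three resulting identities is
`E₃¹² v³ = t³ E₉¹² (1 + v³) (1 - 8v³)²`. At `3τ` in place of `τ`, eliminating `v` between these two
identities expresses `η(3τ)¹²` as a polynomial in `η(τ)³` and `η(9τ)³`; this says
`α³ - 27 = 729 η(3τ)¹² / η(τ)¹²`, and (ii) follows from the second identity at `τ`.
-/

open Filter Finset Topology

section QPochhammer

variable {𝕜 : Type*} [NormedField 𝕜]

/-- The infinite `q`-Pochhammer symbol `(a; q)_∞ = ∏_{k ≥ 0} (1 - a q^k)`. -/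
noncomputable def qPoch (a q : 𝕜) : 𝕜 := ∏' k : ℕ, (1 - a * q ^ k)

/-- The Euler function `(q; q)_∞ = ∏_{k ≥ 1} (1 - q^k)`. -/
noncomputable def eulerFun (q : 𝕜) : 𝕜 := qPoch q q

variable {a q : 𝕜}

lemma norm_pow_lt_one (n : ℕ) [NeZero n] (hq : ‖q‖ < 1) : ‖q ^ n‖ < 1 := by
  rw [norm_pow]
  exact pow_lt_one₀ (norm_nonneg q) hq (NeZero.ne n)

lemma norm_mul_pow_lt_one (ha : ‖a‖ < 1) (hq : ‖q‖ < 1) (k : ℕ) : ‖a * q ^ k‖ < 1 := by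
  rw [norm_mul, norm_pow]
  exact (mul_le_of_le_one_right (norm_nonneg a) (pow_le_one₀ (norm_nonneg q) hq.le)).trans_lt ha

lemma one_sub_ne_zero_of_norm_lt_one (ha : ‖a‖ < 1) : 1 - a ≠ 0 := by
  rw [sub_ne_zero]
  rintro rfl
  simp at ha

variable [CompleteSpace 𝕜]

lemma multipliable_qPoch (a : 𝕜) (hq : ‖q‖ < 1) : Multipliable fun k : ℕ ↦ 1 - a * q ^ k := by
  have : Summable fun k : ℕ ↦ ‖-(a * q ^ k)‖ := by
    simpa using (summable_geometric_of_lt_one (norm_nonneg q) hq).mul_left ‖a‖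
  simpa [sub_eq_add_neg] using multipliable_one_add_of_summable this

lemma hasProd_qPoch (a : 𝕜) (hq : ‖q‖ < 1) : HasProd (fun k : ℕ ↦ 1 - a * q ^ k) (qPoch a q) :=
  (multipliable_qPoch a hq).hasProd

lemma tendsto_qPoch (a : 𝕜) (hq : ‖q‖ < 1) :
    Tendsto (fun n ↦ ∏ k ∈ range n, (1 - a * q ^ k)) atTop (𝓝 (qPoch a q)) :=
  (hasProd_qPoch a hq).tendsto_prod_nat

lemma qPoch_ne_zero (ha : ‖a‖ < 1) (hq : ‖q‖ < 1) : qPoch a q ≠ 0 := by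
  have hsum : Summable fun k : ℕ ↦ ‖-(a * q ^ k)‖ := by
    simpa using (summable_geometric_of_lt_one (norm_nonneg q) hq).mul_left ‖a‖
  have h := tprod_one_add_ne_zero_of_summable (f := fun k : ℕ ↦ -(a * q ^ k))
    (fun k ↦ by
      simpa [← sub_eq_add_neg] using
        one_sub_ne_zero_of_norm_lt_one (norm_mul_pow_lt_one ha hq k)) hsum
  simpa [qPoch, sub_eq_add_neg] using h

lemma eulerFun_ne_zero (hq : ‖q‖ < 1) : eulerFun q ≠ 0 := qPoch_ne_zero hq hq

lemma eulerFun_pow_ne_zero (n : ℕ) [NeZero n] (hq : ‖q‖ < 1) : eulerFun (q ^ n) ≠ 0 :=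
  eulerFun_ne_zero (norm_pow_lt_one n hq)

lemma qPoch_eq_one_sub_mul (a : 𝕜) (hq : ‖q‖ < 1) : qPoch a q = (1 - a) * qPoch (a * q) q := by
  refine tendsto_nhds_unique ((tendsto_qPoch a hq).comp (tendsto_add_atTop_nat 1))
    (((tendsto_qPoch (a * q) hq).const_mul (1 - a)).congr fun n ↦ ?_)
  simp only [Function.comp_apply, prod_range_succ', pow_zero, mul_one, pow_succ', ← mul_assoc]
  exact mul_comm _ _

lemma prod_range_mul_eq_prod_prod {M : Type*} [CommMonoid M] (f : ℕ → M) (n N : ℕ) :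
    ∏ k ∈ range (n * N), f k = ∏ r ∈ range n, ∏ k ∈ range N, f (r + n * k) := by
  induction N with
  | zero => simp
  | succ N ih =>
    rw [mul_add_one, prod_range_add, ih, ← prod_mul_distrib]
    exact prod_congr rfl fun r _ ↦ by rw [prod_range_succ, add_comm r]

lemma qPoch_eq_prod_range (n : ℕ) [NeZero n] (a : 𝕜) (hq : ‖q‖ < 1) :
    qPoch a q = ∏ r ∈ range n, qPoch (a * q ^ r) (q ^ n) := by
  have hlim := (tendsto_qPoch a hq).comp
    (tendsto_id.const_mul_atTop' (Nat.pos_of_ne_zero (NeZero.ne n)))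
  refine tendsto_nhds_unique hlim ((tendsto_finsetProd (range n) fun r _ ↦
    tendsto_qPoch (a * q ^ r) (norm_pow_lt_one n hq)).congr fun N ↦ ?_)
  simp only [Function.comp_apply, id_eq, prod_range_mul_eq_prod_prod, pow_add, pow_mul, mul_assoc]

lemma qPoch_mul_qPoch_neg (a : 𝕜) (hq : ‖q‖ < 1) :
    qPoch a q * qPoch (-a) q = qPoch (a ^ 2) (q ^ 2) := by
  refine tendsto_nhds_unique ((tendsto_qPoch a hq).mul (tendsto_qPoch (-a) hq))
    ((tendsto_qPoch (a ^ 2) (norm_pow_lt_one 2 hq)).congr fun n ↦ ?_)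
  rw [← prod_mul_distrib]
  exact prod_congr rfl fun k _ ↦ by ring

lemma eulerFun_mul_qPoch_neg (hq : ‖q‖ < 1) : eulerFun q * qPoch (-q) q = eulerFun (q ^ 2) :=
  qPoch_mul_qPoch_neg q hq

lemma eulerFun_eq_prod_range_mul (m : ℕ) (hq : ‖q‖ < 1) :
    eulerFun q = (∏ r ∈ range m, qPoch (q ^ (r + 1)) (q ^ (m + 1))) * eulerFun (q ^ (m + 1)) := by
  rw [eulerFun, qPoch_eq_prod_range (m + 1) q hq]
  simp only [← pow_succ', prod_range_succ, eulerFun]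

lemma eulerFun_eq_qPoch_sq_mul (hq : ‖q‖ < 1) :
    eulerFun q = qPoch q (q ^ 2) * eulerFun (q ^ 2) := by
  simpa using eulerFun_eq_prod_range_mul 1 hq

end QPochhammer

section RootsOfUnity

lemma prod_range_one_sub_primitiveRoot_pow_mul {R : Type*} [CommRing R] [IsDomain R] {n : ℕ}
    [NeZero n] {ζ : R} (hζ : IsPrimitiveRoot ζ n) (x : R) :
    ∏ k ∈ range n, (1 - ζ ^ k * x) = 1 - x ^ n := by
  classical
  have h := hζ.pow_sub_pow_eq_prod_sub_mul 1 x (NeZero.pos n)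
  rw [one_pow, Polynomial.nthRootsFinset, ← Multiset.toFinset_eq hζ.nthRoots_one_nodup,
    prod_mk, hζ.nthRoots_eq (one_pow n), Multiset.map_map] at h
  simpa [Finset.prod_eq_multiset_prod] using h.symm

variable {𝕜 : Type*} [NormedField 𝕜] {q ζ : 𝕜}

lemma norm_primitiveRoot_pow_mul {n : ℕ} [NeZero n] (hζ : IsPrimitiveRoot ζ n) (k : ℕ) (a : 𝕜) :
    ‖ζ ^ k * a‖ = ‖a‖ := by
  have hfin : IsOfFinOrder ζ := isOfFinOrder_iff_pow_eq_one.mpr ⟨n, NeZero.pos n, hζ.pow_eq_one⟩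
  rw [norm_mul, norm_pow, hfin.norm_eq_one, one_pow, one_mul]

variable [CompleteSpace 𝕜]

lemma prod_range_qPoch_primitiveRoot_pow_mul {n : ℕ} [NeZero n] (hζ : IsPrimitiveRoot ζ n)
    (a : 𝕜) (hq : ‖q‖ < 1) :
    ∏ k ∈ range n, qPoch (ζ ^ k * a) q = qPoch (a ^ n) (q ^ n) := by
  refine tendsto_nhds_unique (tendsto_finsetProd _ fun k _ ↦ tendsto_qPoch (ζ ^ k * a) hq)
    ((tendsto_qPoch (a ^ n) (norm_pow_lt_one n hq)).congr fun N ↦ ?_)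
  rw [Finset.prod_comm]
  refine prod_congr rfl fun j _ ↦ ?_
  rw [pow_right_comm, ← mul_pow, ← prod_range_one_sub_primitiveRoot_pow_mul hζ]
  simp only [mul_assoc]

lemma prod_range_eulerFun_primitiveRoot_pow_mul {p : ℕ} (hp : p.Prime)
    (hζ : IsPrimitiveRoot ζ p) (hq : ‖q‖ < 1) :
    (∏ k ∈ range p, eulerFun (ζ ^ k * q)) * eulerFun (q ^ p ^ 2) = eulerFun (q ^ p) ^ (p + 1) := by
  obtain ⟨m, rfl⟩ : ∃ m, p = m + 1 := ⟨p - 1, (Nat.succ_pred_prime hp).symm⟩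
  have hqp := norm_pow_lt_one (m + 1) hq
  have hfactor (k : ℕ) : eulerFun (ζ ^ k * q) =
      (∏ r ∈ range m, qPoch ((ζ ^ (r + 1)) ^ k * q ^ (r + 1)) (q ^ (m + 1))) *
        eulerFun (q ^ (m + 1)) := by
    have hnorm : ‖ζ ^ k * q‖ < 1 := by rwa [norm_primitiveRoot_pow_mul hζ]
    have hpow : (ζ ^ k * q) ^ (m + 1) = q ^ (m + 1) := by
      rw [mul_pow, pow_right_comm, hζ.pow_eq_one, one_pow, one_mul]
    rw [eulerFun_eq_prod_range_mul m hnorm, hpow]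
    simp only [mul_pow, pow_right_comm]
  have hprim (r : ℕ) (hr : r ∈ range m) :
      ∏ k ∈ range (m + 1), qPoch ((ζ ^ (r + 1)) ^ k * q ^ (r + 1)) (q ^ (m + 1)) =
        qPoch ((q ^ (m + 1)) ^ (r + 1)) ((q ^ (m + 1)) ^ (m + 1)) := by
    have hcop : (r + 1).Coprime (m + 1) :=
      (Nat.coprime_of_lt_prime r.succ_ne_zero (by simpa using hr) hp).symm
    rw [prod_range_qPoch_primitiveRoot_pow_mul (hζ.pow_of_coprime _ hcop) _ hqp, pow_right_comm]
  calc (∏ k ∈ range (m + 1), eulerFun (ζ ^ k * q)) * eulerFun (q ^ (m + 1) ^ 2)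
      = (∏ r ∈ range m, qPoch ((q ^ (m + 1)) ^ (r + 1)) ((q ^ (m + 1)) ^ (m + 1))) *
          eulerFun (q ^ (m + 1)) ^ (m + 1) * eulerFun ((q ^ (m + 1)) ^ (m + 1)) := by
        simp only [hfactor, prod_mul_distrib, prod_const, card_range]
        rw [Finset.prod_comm, prod_congr rfl hprim, ← pow_mul, ← sq]
    _ = eulerFun (q ^ (m + 1)) ^ (m + 1 + 1) := by
        rw [mul_right_comm, ← eulerFun_eq_prod_range_mul m hqp, ← pow_succ']

end RootsOfUnity

section GaussBinom

variable {K : Type*} [Field K]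

/-- The reciprocal `1 / (q; q)_m` of the finite `q`-Pochhammer symbol, extended by zero to
`m < 0`. -/
def invQFact (q : K) : ℤ → K
  | Int.ofNat n => (∏ k ∈ range n, (1 - q * q ^ k))⁻¹
  | Int.negSucc _ => 0

/-- The Gaussian binomial coefficient `(q; q)_N / ((q; q)_k (q; q)_{N - k})`, which vanishes unless
`0 ≤ k ≤ N`. -/
def gaussBinom (q : K) (N : ℕ) (k : ℤ) : K :=
  (∏ i ∈ range N, (1 - q * q ^ i)) * invQFact q k * invQFact q (N - k)

lemma invQFact_natCast (q : K) (n : ℕ) :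
    invQFact q n = (∏ k ∈ range n, (1 - q * q ^ k))⁻¹ := rfl

lemma invQFact_of_neg (q : K) {m : ℤ} (hm : m < 0) : invQFact q m = 0 := by
  obtain ⟨n, rfl⟩ := Int.eq_negSucc_of_lt_zero hm
  rfl

lemma gaussBinom_symm (q : K) (N : ℕ) (k : ℤ) : gaussBinom q N (N - k) = gaussBinom q N k := by
  rw [gaussBinom, gaussBinom, sub_sub_cancel, mul_right_comm]

lemma gaussBinom_of_neg (q : K) (N : ℕ) {k : ℤ} (hk : k < 0) : gaussBinom q N k = 0 := by
  rw [gaussBinom, invQFact_of_neg q hk, mul_zero, zero_mul]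

lemma gaussBinom_of_lt (q : K) {N : ℕ} {k : ℤ} (hk : N < k) : gaussBinom q N k = 0 := by
  rw [← gaussBinom_symm, gaussBinom_of_neg q N (sub_neg.mpr hk)]

lemma gaussBinom_zero_zero (q : K) : gaussBinom q 0 0 = 1 := by
  simp [gaussBinom, invQFact]

variable {𝕜 : Type*} [NormedField 𝕜] {q : 𝕜}

lemma invQFact_sub_one (hq : ‖q‖ < 1) (m : ℤ) :
    invQFact q (m - 1) = (1 - q ^ m.toNat) * invQFact q m := by
  rcases lt_or_ge m 0 with hm | hm
  · rw [invQFact_of_neg q hm, invQFact_of_neg q (by lia), mul_zero]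
  lift m to ℕ using hm
  cases m with
  | zero => simp [invQFact_of_neg]
  | succ n =>
    have hn := one_sub_ne_zero_of_norm_lt_one (norm_mul_pow_lt_one hq hq n)
    rw [Nat.cast_succ, add_sub_cancel_right, ← Nat.cast_succ, Int.toNat_natCast, invQFact_natCast,
      invQFact_natCast, prod_range_succ, pow_succ', mul_inv_rev, mul_inv_cancel_left₀ hn]

lemma gaussBinom_succ (hq : ‖q‖ < 1) (N : ℕ) (k : ℤ) :
    gaussBinom q (N + 1) k =
      gaussBinom q N k + q ^ (N + 1 - k).toNat * gaussBinom q N (k - 1) := by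
  have hk := invQFact_sub_one hq k
  have hNk := invQFact_sub_one hq (N + 1 - k)
  have hpow : (1 - q ^ (N + 1)) * (invQFact q k * invQFact q (N + 1 - k)) =
      (1 - q ^ (N + 1 - k).toNat * q ^ k.toNat) * (invQFact q k * invQFact q (N + 1 - k)) := by
    rcases lt_or_ge k 0 with h0 | h0
    · rw [invQFact_of_neg q h0, zero_mul, mul_zero, mul_zero]
    rcases lt_or_ge (N + 1 : ℤ) k with hN | hN
    · rw [invQFact_of_neg q (sub_neg.mpr hN), mul_zero, mul_zero, mul_zero]
    rw [← pow_add, show (N + 1 - k).toNat + k.toNat = N + 1 by lia]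
  rw [gaussBinom, gaussBinom, gaussBinom, prod_range_succ, Nat.cast_add_one, ← pow_succ',
    show (N : ℤ) - k = N + 1 - k - 1 by ring, show (N : ℤ) - (k - 1) = N + 1 - k by ring, hk, hNk]
  linear_combination (∏ i ∈ range N, (1 - q * q ^ i)) * hpow

variable [CompleteSpace 𝕜]

lemma tendsto_invQFact (hq : ‖q‖ < 1) : Tendsto (invQFact q) atTop (𝓝 (eulerFun q)⁻¹) := by
  rw [← Nat.map_cast_int_atTop, tendsto_map'_iff]
  exact (tendsto_qPoch q hq).inv₀ (eulerFun_ne_zero hq)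

lemma exists_norm_invQFact_le (hq : ‖q‖ < 1) : ∃ C, ∀ m, ‖invQFact q m‖ ≤ C := by
  obtain ⟨C, hC⟩ := ((tendsto_qPoch q hq).inv₀ (eulerFun_ne_zero hq)).norm.bddAbove_range
  have hC' (n : ℕ) : ‖invQFact q n‖ ≤ C := hC ⟨n, rfl⟩
  refine ⟨C, fun m ↦ ?_⟩
  rcases lt_or_ge m 0 with hm | hm
  · simpa [invQFact_of_neg q hm] using (norm_nonneg _).trans (hC' 0)
  · lift m to ℕ using hm
    exact hC' m

lemma tendsto_gaussBinom (hq : ‖q‖ < 1) (j : ℤ) :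
    Tendsto (fun n : ℕ ↦ gaussBinom q (n + n) (n + j)) atTop (𝓝 (eulerFun q)⁻¹) := by
  have hprod := (tendsto_qPoch q hq).comp (tendsto_id.atTop_add_atTop tendsto_id)
  have hadd := (tendsto_invQFact hq).comp
    (tendsto_atTop_add_const_right _ j tendsto_natCast_atTop_atTop)
  have hsub := (tendsto_invQFact hq).comp
    (tendsto_atTop_add_const_right _ (-j) tendsto_natCast_atTop_atTop)
  have h := (hprod.mul hadd).mul hsub
  change Tendsto _ _ (𝓝 (eulerFun q * _ * _)) at h
  rw [mul_inv_cancel₀ (eulerFun_ne_zero hq), one_mul] at h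
  refine h.congr fun n ↦ ?_
  simp only [Function.comp_apply, id_eq, gaussBinom, Nat.cast_add]
  ring_nf

lemma exists_norm_gaussBinom_le (hq : ‖q‖ < 1) : ∃ C, ∀ N k, ‖gaussBinom q N k‖ ≤ C := by
  obtain ⟨C, hC⟩ := exists_norm_invQFact_le hq
  obtain ⟨D, hD⟩ := (tendsto_qPoch q hq).norm.bddAbove_range
  have hD' (n : ℕ) : ‖∏ k ∈ range n, (1 - q * q ^ k)‖ ≤ D := hD ⟨n, rfl⟩
  have hC0 := (norm_nonneg _).trans (hC 0)
  have hD0 := (norm_nonneg _).trans (hD' 0)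
  refine ⟨D * C * C, fun N k ↦ ?_⟩
  rw [gaussBinom, norm_mul, norm_mul]
  gcongr
  exacts [hD' _, hC _, hC _]

end GaussBinom

section JacobiTripleProduct

/-- The triangular number `n(n+1)/2` of an integer `n`. -/
def triangular (n : ℤ) : ℕ := (n * (n + 1) / 2).toNat

lemma two_mul_triangular (n : ℤ) : 2 * (triangular n : ℤ) = n * (n + 1) := by
  have hnonneg : 0 ≤ n * (n + 1) := by
    rcases lt_or_ge n 0 with hn | hn <;> nlinarith
  rw [triangular, Int.toNat_of_nonneg (Int.ediv_nonneg hnonneg zero_le_two),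
    Int.two_mul_ediv_two_of_even (Int.even_mul_succ_self n)]

/-- The term `a^(n(n+1)/2) b^(n(n-1)/2)` of Ramanujan's theta series. -/
def ramanujanThetaTerm {R : Type*} [Monoid R] (a b : R) (n : ℤ) : R :=
  a ^ triangular n * b ^ triangular (-n)

/-- Ramanujan's general theta function `f(a, b) = ∑ₙ a^(n(n+1)/2) b^(n(n-1)/2)`, summed over all
integers `n`. -/
noncomputable def ramanujanTheta {𝕜 : Type*} [NormedField 𝕜] (a b : 𝕜) : 𝕜 :=
  ∑' n : ℤ, ramanujanThetaTerm a b n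

lemma ramanujanThetaTerm_neg {R : Type*} [CommMonoid R] (a b : R) (n : ℤ) :
    ramanujanThetaTerm a b (-n) = ramanujanThetaTerm b a n := by
  rw [ramanujanThetaTerm, ramanujanThetaTerm, neg_neg, mul_comm]

lemma ramanujanThetaTerm_zero {R : Type*} [Monoid R] (a b : R) : ramanujanThetaTerm a b 0 = 1 := by
  simp [ramanujanThetaTerm, triangular]

lemma mul_pow_mul_ramanujanThetaTerm {R : Type*} [CommMonoid R] (a b : R) {m : ℕ} {n : ℤ}
    (h : n ≤ m) :
    a * (a * b) ^ m * ramanujanThetaTerm a b n =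
      (a * b) ^ (m - n).toNat * ramanujanThetaTerm a b (n + 1) := by
  have ha : 1 + m + triangular n = (m - n).toNat + triangular (n + 1) := by
    have := two_mul_triangular n
    have := two_mul_triangular (n + 1)
    zify
    rw [Int.toNat_of_nonneg (by lia)]
    linarith
  have hb : m + triangular (-n) = (m - n).toNat + triangular (-(n + 1)) := by
    have := two_mul_triangular (-n)
    have := two_mul_triangular (-(n + 1))
    zify
    rw [Int.toNat_of_nonneg (by lia)]
    linarith
  calc a * (a * b) ^ m * ramanujanThetaTerm a b n
      = a ^ (1 + m + triangular n) * b ^ (m + triangular (-n)) := by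
        simp only [ramanujanThetaTerm, mul_pow, pow_add, pow_one]
        ac_rfl
    _ = (a * b) ^ (m - n).toNat * ramanujanThetaTerm a b (n + 1) := by
        rw [ha, hb, ramanujanThetaTerm, mul_pow, pow_add, pow_add]
        ac_rfl

variable {𝕜 : Type*} [NormedField 𝕜] {a b : 𝕜}

lemma ramanujanTheta_comm (a b : 𝕜) : ramanujanTheta a b = ramanujanTheta b a := by
  rw [ramanujanTheta, ← (Equiv.neg ℤ).tsum_eq]
  exact tsum_congr fun n ↦ ramanujanThetaTerm_neg a b n

lemma summable_norm_ramanujanThetaTerm (hab : ‖a * b‖ < 1) :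
    Summable fun n : ℤ ↦ ‖ramanujanThetaTerm a b n‖ := by
  have key {a b : 𝕜} (hab : ‖a * b‖ < 1) : Summable fun n : ℕ ↦ ‖ramanujanThetaTerm a b n‖ := by
    have hlim : Tendsto (fun n : ℕ ↦ ‖a * (a * b) ^ n‖) atTop (𝓝 0) := by
      simpa using ((tendsto_pow_atTop_nhds_zero_of_norm_lt_one hab).const_mul a).norm
    refine summable_of_ratio_norm_eventually_le one_half_lt_one ?_
    filter_upwards [hlim.eventually_le_const one_half_pos] with n hn
    have h := mul_pow_mul_ramanujanThetaTerm a b (le_refl (n : ℤ))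
    rw [sub_self, Int.toNat_zero, pow_zero, one_mul] at h
    rw [norm_norm, norm_norm, Nat.cast_succ, ← h, norm_mul]
    gcongr
  refine .of_nat_of_neg (key hab) ?_
  simpa only [ramanujanThetaTerm_neg] using key (mul_comm a b ▸ hab)

lemma hasSum_finite_triple_product_succ_left (hab : ‖a * b‖ < 1) {m n : ℕ} {P : 𝕜}
    (h : HasSum (fun j : ℤ ↦ gaussBinom (a * b) (m + n) (n + j) * ramanujanThetaTerm a b j) P) :
    HasSum (fun j : ℤ ↦ gaussBinom (a * b) (m + 1 + n) (n + j) * ramanujanThetaTerm a b j)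
      (P * (1 + a * (a * b) ^ m)) := by
  have hshift := ((Equiv.subRight (1 : ℤ)).hasSum_iff.mpr h).mul_left (a * (a * b) ^ m)
  rw [mul_one_add, mul_comm P (a * _)]
  refine (h.add hshift).congr_fun fun j ↦ ?_
  rw [Nat.add_right_comm m 1 n, gaussBinom_succ hab, Function.comp_apply, Equiv.subRight_apply,
    add_mul, ← add_sub_assoc]
  congr 1
  rcases le_or_gt (j - 1) m with hj | hj
  · have hshift := mul_pow_mul_ramanujanThetaTerm a b hj
    rw [sub_add_cancel] at hshift
    rw [show ((m + n : ℕ) + 1 - (n + j) : ℤ) = m - (j - 1) by push_cast; ring]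
    linear_combination -gaussBinom (a * b) (m + n) (n + j - 1) * hshift
  · rw [gaussBinom_of_lt (a * b) (by push_cast; lia : ((m + n : ℕ) : ℤ) < n + j - 1)]
    ring

lemma hasSum_finite_triple_product_swap {m n : ℕ} {P : 𝕜}
    (h : HasSum (fun j : ℤ ↦ gaussBinom (a * b) (m + n) (n + j) * ramanujanThetaTerm a b j) P) :
    HasSum (fun j : ℤ ↦ gaussBinom (b * a) (n + m) (m + j) * ramanujanThetaTerm b a j) P := by
  refine ((Equiv.neg ℤ).hasSum_iff.mpr h).congr_fun fun j ↦ ?_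
  rw [Function.comp_apply, Equiv.neg_apply, ramanujanThetaTerm_neg, ← gaussBinom_symm, mul_comm b a,
    Nat.add_comm n m]
  congr 2
  push_cast
  ring

lemma hasSum_finite_triple_product (hab : ‖a * b‖ < 1) (m n : ℕ) :
    HasSum (fun j : ℤ ↦ gaussBinom (a * b) (m + n) (n + j) * ramanujanThetaTerm a b j)
      ((∏ k ∈ range n, (1 + b * (a * b) ^ k)) * ∏ k ∈ range m, (1 + a * (a * b) ^ k)) := by
  have hleft {a b : 𝕜} (hab : ‖a * b‖ < 1) {n : ℕ} {P : 𝕜}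
      (h : HasSum (fun j : ℤ ↦ gaussBinom (a * b) (0 + n) (n + j) * ramanujanThetaTerm a b j) P)
      (m : ℕ) :
      HasSum (fun j : ℤ ↦ gaussBinom (a * b) (m + n) (n + j) * ramanujanThetaTerm a b j)
        (P * ∏ k ∈ range m, (1 + a * (a * b) ^ k)) := by
    induction m with
    | zero => simpa using h
    | succ m ih =>
      rw [prod_range_succ, ← mul_assoc]
      exact hasSum_finite_triple_product_succ_left hab ih
  have hzero : HasSum (fun j : ℤ ↦
      gaussBinom (b * a) (0 + 0) ((0 : ℕ) + j) * ramanujanThetaTerm b a j) 1 := by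
    convert hasSum_single (0 : ℤ) fun j hj ↦ ?_
    · simp [gaussBinom_zero_zero, ramanujanThetaTerm_zero]
    · rcases lt_or_gt_of_ne hj with h | h
      · simp [gaussBinom_of_neg _ _ h]
      · simp [gaussBinom_of_lt (N := 0) _ h]
  have hright := hasSum_finite_triple_product_swap (hleft (mul_comm a b ▸ hab) hzero n)
  rw [one_mul, mul_comm b a] at hright
  exact hleft hab hright m

variable [CompleteSpace 𝕜]

/-- **Jacobi's triple product identity**. -/
theorem ramanujanTheta_eq_qPoch (hab : ‖a * b‖ < 1) :
    ramanujanTheta a b = eulerFun (a * b) * qPoch (-a) (a * b) * qPoch (-b) (a * b) := by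
  obtain ⟨C, hC⟩ := exists_norm_gaussBinom_le hab
  have hlim := tendsto_tsum_of_dominated_convergence (𝓕 := atTop)
    (f := fun (n : ℕ) (j : ℤ) ↦ gaussBinom (a * b) (n + n) (n + j) * ramanujanThetaTerm a b j)
    (g := fun j ↦ (eulerFun (a * b))⁻¹ * ramanujanThetaTerm a b j)
    ((summable_norm_ramanujanThetaTerm hab).mul_left C)
    (fun j ↦ (tendsto_gaussBinom hab j).mul_const _)
    (.of_forall fun n j ↦ by rw [norm_mul]; gcongr; exact hC _ _)
  have hprod := (tendsto_qPoch (-b) hab).mul (tendsto_qPoch (-a) hab)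
  simp only [neg_mul, sub_neg_eq_add] at hprod
  have h := tendsto_nhds_unique
    (hlim.congr fun n ↦ (hasSum_finite_triple_product hab n n).tsum_eq) hprod
  rw [tsum_mul_left] at h
  rw [mul_assoc, mul_comm (qPoch (-a) _), ← h, mul_inv_cancel_left₀ (eulerFun_ne_zero hab),
    ramanujanTheta]

end JacobiTripleProduct

section Dissection

lemma tsum_int_eq_sum_tsum_mul_add {E : Type*} [NormedAddCommGroup E] [CompleteSpace E] (n : ℕ)
    [NeZero n] {f : ℤ → E} (hf : Summable f) :
    ∑' k, f k = ∑ r : Fin n, ∑' m : ℤ, f (m * n + r) := by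
  have hprod := (Int.divModEquiv n).symm.summable_iff.mpr hf
  have hsymm (m : ℤ) (r : Fin n) : (Int.divModEquiv n).symm (m, r) = m * n + r := by
    simp [Int.divModEquiv]
  rw [← (Int.divModEquiv n).symm.tsum_eq]
  refine hprod.tsum_prod.trans ?_
  simp only [Function.comp_apply, tsum_fintype, hsymm]
  refine Summable.tsum_finsetSum fun r _ ↦ ?_
  simpa only [Function.comp_def, hsymm] using
    hprod.comp_injective (Prod.mk_left_injective r)

lemma ramanujanThetaTerm_three_mul {R : Type*} [CommMonoid R] (a b : R) (n : ℤ) :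
    ramanujanThetaTerm a b (3 * n) =
      ramanujanThetaTerm (a ^ 6 * b ^ 3) (a ^ 3 * b ^ 6) n := by
  have h (n : ℤ) : triangular (3 * n) = 6 * triangular n + 3 * triangular (-n) := by
    have := two_mul_triangular n
    have := two_mul_triangular (-n)
    have := two_mul_triangular (3 * n)
    zify
    linarith
  rw [ramanujanThetaTerm, ← mul_neg, h, h, neg_neg, ramanujanThetaTerm]
  simp only [mul_pow, pow_add, pow_mul]
  ac_rfl

lemma ramanujanThetaTerm_three_mul_add_one {R : Type*} [CommMonoid R] (a b : R) (n : ℤ) :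
    ramanujanThetaTerm a b (3 * n + 1) = a * ramanujanThetaTerm (a ^ 9 * b ^ 6) (b ^ 3) n := by
  have hn := two_mul_triangular n
  have ha : triangular (3 * n + 1) = 9 * triangular n + 1 := by
    have := two_mul_triangular (3 * n + 1)
    zify
    linarith
  have hb : triangular (-(3 * n + 1)) = 6 * triangular n + 3 * triangular (-n) := by
    have := two_mul_triangular (-n)
    have := two_mul_triangular (-(3 * n + 1))
    zify
    linarith
  rw [ramanujanThetaTerm, ha, hb, ramanujanThetaTerm]
  simp only [mul_pow, pow_add, pow_mul, pow_one]
  ac_rfl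

lemma ramanujanThetaTerm_three_mul_add_two {R : Type*} [CommMonoid R] (a b : R) (n : ℤ) :
    ramanujanThetaTerm a b (3 * n + 2) =
      b * ramanujanThetaTerm (a ^ 3) (a ^ 6 * b ^ 9) (n + 1) := by
  rw [← ramanujanThetaTerm_neg, show -(3 * n + 2) = 3 * -(n + 1) + 1 by ring,
    ramanujanThetaTerm_three_mul_add_one, ramanujanThetaTerm_neg, mul_comm (b ^ 9)]

variable {𝕜 : Type*} [NormedField 𝕜] [CompleteSpace 𝕜] {a b t : 𝕜}

lemma ramanujanTheta_trisection (hab : ‖a * b‖ < 1) :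
    ramanujanTheta a b = ramanujanTheta (a ^ 6 * b ^ 3) (a ^ 3 * b ^ 6) +
      a * ramanujanTheta (a ^ 9 * b ^ 6) (b ^ 3) + b * ramanujanTheta (a ^ 3) (a ^ 6 * b ^ 9) := by
  have hshift : ∑' m : ℤ, ramanujanThetaTerm (a ^ 3) (a ^ 6 * b ^ 9) (m + 1) =
      ramanujanTheta (a ^ 3) (a ^ 6 * b ^ 9) := (Equiv.addRight (1 : ℤ)).tsum_eq _
  rw [← hshift, ramanujanTheta, ramanujanTheta, ramanujanTheta,
    tsum_int_eq_sum_tsum_mul_add 3 (summable_norm_ramanujanThetaTerm hab).of_norm]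
  simp [Fin.sum_univ_three, mul_comm _ (3 : ℤ), ramanujanThetaTerm_three_mul,
    ramanujanThetaTerm_three_mul_add_one, ramanujanThetaTerm_three_mul_add_two, tsum_mul_left]

/-- In Ramanujan's notation, `f(-t, -t)` is `φ(-t)`. -/
lemma ramanujanTheta_neg_neg_trisection (ht : ‖t‖ < 1) :
    ramanujanTheta (-t) (-t) =
      ramanujanTheta (-t ^ 9) (-t ^ 9) - 2 * t * ramanujanTheta (-t ^ 3) (-t ^ 15) := by
  rw [ramanujanTheta_trisection (by simpa [← sq] using norm_pow_lt_one 2 ht)]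
  rw [ramanujanTheta_comm ((-t) ^ 9 * _)]
  ring_nf

/-- In Ramanujan's notation, `f(1, t)` is `2 ψ(t)`. -/
lemma ramanujanTheta_one_trisection (ht : ‖t‖ < 1) :
    ramanujanTheta 1 t = 2 * ramanujanTheta (t ^ 3) (t ^ 6) + t * ramanujanTheta 1 (t ^ 9) := by
  rw [ramanujanTheta_trisection (by simpa using ht),
    ramanujanTheta_comm (1 ^ 9 * _)]
  ring_nf

end Dissection

section ThetaProducts

variable {𝕜 : Type*} [NormedField 𝕜] [CompleteSpace 𝕜] {q : 𝕜}

lemma ramanujanTheta_neg_neg_mul (hq : ‖q‖ < 1) :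
    ramanujanTheta (-q) (-q) * eulerFun (q ^ 2) = eulerFun q ^ 2 := by
  have hq2 : ‖-q * -q‖ < 1 := by simpa [← sq] using norm_pow_lt_one 2 hq
  rw [ramanujanTheta_eq_qPoch hq2, neg_neg, neg_mul_neg, ← sq, eulerFun_eq_qPoch_sq_mul hq]
  ring

lemma ramanujanTheta_one_mul (hq : ‖q‖ < 1) :
    ramanujanTheta 1 q * eulerFun q = 2 * eulerFun (q ^ 2) ^ 2 := by
  rw [ramanujanTheta_eq_qPoch (by rwa [one_mul]), one_mul, qPoch_eq_one_sub_mul (-1) hq,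
    neg_one_mul, ← eulerFun_mul_qPoch_neg hq]
  ring

lemma ramanujanTheta_self_sq_mul (hq : ‖q‖ < 1) :
    ramanujanTheta q (q ^ 2) * (eulerFun q * eulerFun (q ^ 6)) =
      eulerFun (q ^ 2) * eulerFun (q ^ 3) ^ 2 := by
  have hq3 := norm_pow_lt_one 3 hq
  have hsplit := qPoch_eq_prod_range 3 (-q) hq
  have h2 := eulerFun_mul_qPoch_neg hq
  have h6 := eulerFun_mul_qPoch_neg hq3
  rw [ramanujanTheta_eq_qPoch (by rwa [← pow_succ'])]
  simp only [prod_range_succ, prod_range_zero] at hsplit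
  ring_nf at hsplit h2 h6 ⊢
  rw [← h2, hsplit, ← h6]
  ring

lemma qPoch_mul_qPoch_pow_five (hq : ‖q‖ < 1) :
    qPoch q (q ^ 6) * qPoch (q ^ 5) (q ^ 6) * (eulerFun (q ^ 2) * eulerFun (q ^ 3)) =
      eulerFun q * eulerFun (q ^ 6) := by
  have hsplit := qPoch_eq_prod_range 3 q (norm_pow_lt_one 2 hq)
  have h1 := eulerFun_eq_qPoch_sq_mul hq
  have h3 := eulerFun_eq_qPoch_sq_mul (norm_pow_lt_one 3 hq)
  simp only [prod_range_succ, prod_range_zero] at hsplit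
  ring_nf at hsplit h1 h3 ⊢
  rw [h1, hsplit, h3]
  ring

lemma ramanujanTheta_neg_self_neg_pow_five_mul (hq : ‖q‖ < 1) :
    ramanujanTheta (-q) (-q ^ 5) * (eulerFun (q ^ 2) * eulerFun (q ^ 3)) =
      eulerFun q * eulerFun (q ^ 6) ^ 2 := by
  have hq6 : -q * -q ^ 5 = q ^ 6 := by ring
  rw [ramanujanTheta_eq_qPoch (hq6 ▸ norm_pow_lt_one 6 hq), hq6, neg_neg, neg_neg]
  linear_combination eulerFun (q ^ 6) * qPoch_mul_qPoch_pow_five hq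

end ThetaProducts

section CubicContinuedFraction

variable {𝕜 : Type*} [NormedField 𝕜] {q t ζ : 𝕜}

/-- Ramanujan's cubic continued fraction as a function of `t = q^(1/3)`, written as a quotient of
Euler functions. -/
noncomputable def cubicCF (t : 𝕜) : 𝕜 :=
  t * (eulerFun (t ^ 3) * eulerFun (t ^ 18) ^ 3) / (eulerFun (t ^ 6) * eulerFun (t ^ 9) ^ 3)

lemma cubicCF_mul (hζ : ζ ^ 3 = 1) (t : 𝕜) : cubicCF (ζ * t) = ζ * cubicCF t := by
  have h (k : ℕ) : (ζ * t) ^ (3 * k) = t ^ (3 * k) := by rw [mul_pow, pow_mul, hζ, one_pow, one_mul]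
  rw [cubicCF, h 1, h 2, h 3, h 6, cubicCF]
  ring

variable [CompleteSpace 𝕜]

lemma tprod_cubicCF_factors (hq : ‖q‖ < 1) :
    ∏' n : ℕ, ((1 - q ^ (6 * (n + 1) - 1)) * (1 - q ^ (6 * (n + 1) - 5)) /
      (1 - q ^ (6 * (n + 1) - 3)) ^ 2) =
        eulerFun q * eulerFun (q ^ 6) ^ 3 / (eulerFun (q ^ 2) * eulerFun (q ^ 3) ^ 3) := by
  have h2 := eulerFun_pow_ne_zero 2 hq
  have h3 := eulerFun_pow_ne_zero 3 hq
  have h6 := eulerFun_pow_ne_zero 6 hq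
  have hq6 := norm_pow_lt_one 6 hq
  have hden : qPoch (q ^ 3) (q ^ 6) ≠ 0 := qPoch_ne_zero (norm_pow_lt_one 3 hq) hq6
  have hprod : HasProd (fun n : ℕ ↦ (1 - q ^ (6 * (n + 1) - 1)) * (1 - q ^ (6 * (n + 1) - 5)) /
      (1 - q ^ (6 * (n + 1) - 3)) ^ 2)
      (qPoch (q ^ 5) (q ^ 6) * qPoch q (q ^ 6) / qPoch (q ^ 3) (q ^ 6) ^ 2) := by
    refine (((hasProd_qPoch (q ^ 5) hq6).mul (hasProd_qPoch q hq6)).div₀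
      ((hasProd_qPoch (q ^ 3) hq6).pow 2) (pow_ne_zero 2 hden)).congr_fun fun n ↦ ?_
    rw [show 6 * (n + 1) - 1 = 6 * n + 5 by lia, show 6 * (n + 1) - 5 = 6 * n + 1 by lia,
      show 6 * (n + 1) - 3 = 6 * n + 3 by lia]
    ring
  have hfive := qPoch_mul_qPoch_pow_five hq
  have hcube := eulerFun_eq_qPoch_sq_mul (norm_pow_lt_one 3 hq)
  rw [← pow_mul] at hcube
  rw [hprod.tprod_eq, mul_comm (qPoch _ _), eq_div_of_mul_eq (mul_ne_zero h2 h3) hfive, hcube]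
  rw [hcube] at h3
  field_simp

lemma cubicCF_ne_zero (ht : ‖t‖ < 1) (ht0 : t ≠ 0) : cubicCF t ≠ 0 := by
  have h3 := eulerFun_pow_ne_zero 3 ht
  have h6 := eulerFun_pow_ne_zero 6 ht
  have h9 := eulerFun_pow_ne_zero 9 ht
  have h18 := eulerFun_pow_ne_zero 18 ht
  unfold cubicCF
  positivity

lemma eulerFun_sq_mul_eulerFun_pow_eighteen (ht : ‖t‖ < 1) :
    eulerFun t ^ 2 * eulerFun (t ^ 18) =
      eulerFun (t ^ 2) * eulerFun (t ^ 9) ^ 2 * (1 - 2 * cubicCF t) := by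
  have h6 := eulerFun_pow_ne_zero 6 ht
  have h9 := eulerFun_pow_ne_zero 9 ht
  have hφ := ramanujanTheta_neg_neg_mul ht
  have hφ9 := ramanujanTheta_neg_neg_mul (norm_pow_lt_one 9 ht)
  have hf := ramanujanTheta_neg_self_neg_pow_five_mul (norm_pow_lt_one 3 ht)
  simp only [← pow_mul, Nat.reduceMul] at hφ9 hf
  rw [cubicCF, ← hφ, ramanujanTheta_neg_neg_trisection ht]
  field_simp
  linear_combination eulerFun (t ^ 2) * eulerFun (t ^ 6) * eulerFun (t ^ 9) * hφ9 -
    2 * t * eulerFun (t ^ 2) * eulerFun (t ^ 18) * hf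

lemma eulerFun_sq_mul_cubicCF [NeZero (2 : 𝕜)] (ht : ‖t‖ < 1) :
    eulerFun (t ^ 2) ^ 2 * eulerFun (t ^ 9) * cubicCF t =
      t * eulerFun (t ^ 18) ^ 2 * eulerFun t * (1 + cubicCF t) := by
  have h3 := eulerFun_pow_ne_zero 3 ht
  have h6 := eulerFun_pow_ne_zero 6 ht
  have h9 := eulerFun_pow_ne_zero 9 ht
  have h18 := eulerFun_pow_ne_zero 18 ht
  have hψ := ramanujanTheta_one_mul ht
  have hψ9 := ramanujanTheta_one_mul (norm_pow_lt_one 9 ht)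
  have hf := ramanujanTheta_self_sq_mul (norm_pow_lt_one 3 ht)
  simp only [← pow_mul, Nat.reduceMul] at hψ9 hf
  rw [ramanujanTheta_one_trisection ht, eq_div_of_mul_eq h9 hψ9,
    eq_div_of_mul_eq (mul_ne_zero h3 h18) hf] at hψ
  refine mul_left_cancel₀ (two_ne_zero (α := 𝕜)) ?_
  rw [cubicCF]
  field_simp at hψ ⊢
  linear_combination -t * hψ

lemma eulerFun_cube_mul_cubicCF [NeZero (2 : 𝕜)] (ht : ‖t‖ < 1) :
    eulerFun t ^ 3 * cubicCF t =
      t * eulerFun (t ^ 9) ^ 3 * ((1 + cubicCF t) * (1 - 2 * cubicCF t) ^ 2) := by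
  have h1 := eulerFun_ne_zero ht
  have h2 := eulerFun_pow_ne_zero 2 ht
  have h9 := eulerFun_pow_ne_zero 9 ht
  have h18 := eulerFun_pow_ne_zero 18 ht
  have hφ := eulerFun_sq_mul_eulerFun_pow_eighteen ht
  have hψ := eulerFun_sq_mul_cubicCF ht
  refine mul_left_cancel₀ (mul_ne_zero (mul_ne_zero h1 h9)
    (mul_ne_zero (pow_ne_zero 2 h2) (pow_ne_zero 2 h18))) ?_
  calc eulerFun t * eulerFun (t ^ 9) * (eulerFun (t ^ 2) ^ 2 * eulerFun (t ^ 18) ^ 2) *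
        (eulerFun t ^ 3 * cubicCF t)
      = (eulerFun t ^ 2 * eulerFun (t ^ 18)) ^ 2 *
          (eulerFun (t ^ 2) ^ 2 * eulerFun (t ^ 9) * cubicCF t) := by ring
    _ = (eulerFun (t ^ 2) * eulerFun (t ^ 9) ^ 2 * (1 - 2 * cubicCF t)) ^ 2 *
          (t * eulerFun (t ^ 18) ^ 2 * eulerFun t * (1 + cubicCF t)) := by rw [hφ, hψ]
    _ = _ := by ring

lemma eulerFun_pow_twelve_mul_cubicCF [NeZero (2 : 𝕜)] (hζ : IsPrimitiveRoot ζ 3) (ht : ‖t‖ < 1) :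
    eulerFun (t ^ 3) ^ 12 * cubicCF t ^ 3 =
      t ^ 3 * eulerFun (t ^ 9) ^ 12 * ((1 + cubicCF t ^ 3) * (1 - 8 * cubicCF t ^ 3) ^ 2) := by
  have hζk (k : ℕ) : (ζ ^ k) ^ 3 = 1 := by rw [pow_right_comm, hζ.pow_eq_one, one_pow]
  have hζ9 (k : ℕ) : (ζ ^ k * t) ^ 9 = t ^ 9 := by
    rw [mul_pow, pow_mul _ 3 3, hζk, one_pow, one_mul]
  have hcube (k : ℕ) : eulerFun (ζ ^ k * t) ^ 3 * (ζ ^ k * cubicCF t) =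
      ζ ^ k * t * eulerFun (t ^ 9) ^ 3 *
        ((1 - ζ ^ k * -cubicCF t) * (1 - ζ ^ k * (2 * cubicCF t)) ^ 2) := by
    have h := eulerFun_cube_mul_cubicCF (t := ζ ^ k * t) (by rwa [norm_primitiveRoot_pow_mul hζ])
    rw [cubicCF_mul (hζk k), hζ9] at h
    linear_combination h
  have hprod := prod_congr (rfl : range 3 = range 3) fun k _ ↦ hcube k
  simp only [prod_mul_distrib, prod_pow, prod_const, card_range,
    prod_range_one_sub_primitiveRoot_pow_mul hζ] at hprod
  have hE := prod_range_eulerFun_primitiveRoot_pow_mul Nat.prime_three hζ ht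
  have hζprod : ∏ k ∈ range 3, ζ ^ k = 1 := by simp [prod_range_succ, ← pow_succ', hζ.pow_eq_one]
  simp only [Nat.reducePow, Nat.reduceAdd] at hE
  rw [hζprod] at hprod
  calc eulerFun (t ^ 3) ^ 12 * cubicCF t ^ 3
      = (eulerFun (t ^ 3) ^ 4) ^ 3 * cubicCF t ^ 3 := by ring
    _ = _ := by
      rw [← hE]
      linear_combination eulerFun (t ^ 9) ^ 3 * hprod

end CubicContinuedFraction

section ModularParametrization

variable {τ : ℂ}

lemma norm_nome_lt_one (hτ : 0 < τ.im) : ‖nome τ‖ < 1 :=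
  UpperHalfPlane.norm_exp_two_pi_I_lt_one ⟨τ, hτ⟩

lemma nome_natCast_mul (n : ℕ) (τ : ℂ) : nome (n * τ) = nome τ ^ n := by
  rw [nome, nome, ← exp_nat_mul, mul_left_comm]

lemma nome_ne_zero (τ : ℂ) : nome τ ≠ 0 := exp_ne_zero _

lemma nome_eq_exp_pow (τ : ℂ) : nome τ = exp (Real.pi * I * τ / 12) ^ 24 := by
  rw [nome, ← exp_nat_mul]
  push_cast
  ring_nf

lemma dedekindEta_eq (τ : ℂ) :
    dedekindEta τ = exp (Real.pi * I * τ / 12) * eulerFun (nome τ) := by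
  rw [dedekindEta, eulerFun, qPoch]
  congr 1
  refine tprod_congr fun n ↦ ?_
  rw [← pow_succ', ← nome_natCast_mul, nome]
  push_cast
  ring_nf

lemma dedekindEta_natCast_mul (n : ℕ) (τ : ℂ) :
    dedekindEta (n * τ) = exp (Real.pi * I * τ / 12) ^ n * eulerFun (nome τ ^ n) := by
  rw [dedekindEta_eq, nome_natCast_mul, mul_left_comm, mul_div_assoc, exp_nat_mul]

lemma dedekindEta_ne_zero (hτ : 0 < τ.im) : dedekindEta τ ≠ 0 := by
  rw [dedekindEta_eq]
  exact mul_ne_zero (exp_ne_zero _) (eulerFun_ne_zero (norm_nome_lt_one hτ))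

lemma c_three_mul (hτ : 0 < τ.im) : c (3 * τ) = cubicCF (nome τ) := by
  have hexp : exp (2 * Real.pi * I * (3 * τ) / 3) = nome τ := by
    rw [nome]
    ring_nf
  have hnome : nome (3 * τ) = nome τ ^ 3 := nome_natCast_mul 3 τ
  rw [c, hnome, tprod_cubicCF_factors (norm_pow_lt_one 3 (norm_nome_lt_one hτ)), hexp, cubicCF]
  simp only [← pow_mul, Nat.reduceMul, mul_div_assoc]

lemma dedekindEta_cube_mul_c_three_mul (hτ : 0 < τ.im) :
    dedekindEta τ ^ 3 * c (3 * τ) =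
      dedekindEta (9 * τ) ^ 3 * ((1 + c (3 * τ)) * (1 - 2 * c (3 * τ)) ^ 2) := by
  have h := eulerFun_cube_mul_cubicCF (norm_nome_lt_one hτ)
  have h9 := dedekindEta_natCast_mul 9 τ
  rw [Nat.cast_ofNat] at h9
  rw [h9, dedekindEta_eq, c_three_mul hτ]
  linear_combination exp (Real.pi * I * τ / 12) ^ 3 * h +
    exp (Real.pi * I * τ / 12) ^ 3 * eulerFun (nome τ ^ 9) ^ 3 *
      ((1 + cubicCF (nome τ)) * (1 - 2 * cubicCF (nome τ)) ^ 2) * nome_eq_exp_pow τ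

lemma dedekindEta_three_mul_pow_twelve_mul_c_cube (hτ : 0 < τ.im) :
    dedekindEta (3 * τ) ^ 12 * c (3 * τ) ^ 3 =
      dedekindEta (9 * τ) ^ 12 * ((1 + c (3 * τ) ^ 3) * (1 - 8 * c (3 * τ) ^ 3) ^ 2) := by
  have h := eulerFun_pow_twelve_mul_cubicCF (isPrimitiveRoot_exp 3 three_ne_zero)
    (norm_nome_lt_one hτ)
  have h3 := dedekindEta_natCast_mul 3 τ
  have h9 := dedekindEta_natCast_mul 9 τ
  have hq : nome τ ^ 3 = exp (Real.pi * I * τ / 12) ^ 72 := by rw [nome_eq_exp_pow, ← pow_mul]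
  rw [Nat.cast_ofNat] at h3 h9
  rw [h3, h9, c_three_mul hτ]
  linear_combination exp (Real.pi * I * τ / 12) ^ 36 * h +
    exp (Real.pi * I * τ / 12) ^ 36 * eulerFun (nome τ ^ 9) ^ 12 *
      ((1 + cubicCF (nome τ) ^ 3) * (1 - 8 * cubicCF (nome τ) ^ 3) ^ 2) * hq

lemma dedekindEta_three_mul_pow_twelve (hτ : 0 < τ.im) :
    dedekindEta (3 * τ) ^ 12 =
      27 * dedekindEta (9 * τ) ^ 9 * dedekindEta τ ^ 3 +
        9 * dedekindEta (9 * τ) ^ 6 * dedekindEta τ ^ 6 +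
        dedekindEta (9 * τ) ^ 3 * dedekindEta τ ^ 9 := by
  have hc : c (3 * τ) ≠ 0 := c_three_mul hτ ▸ cubicCF_ne_zero (norm_nome_lt_one hτ) (nome_ne_zero τ)
  have h1 := dedekindEta_cube_mul_c_three_mul hτ
  have h2 := dedekindEta_three_mul_pow_twelve_mul_c_cube hτ
  generalize c (3 * τ) = v at *
  generalize dedekindEta (9 * τ) = m at *
  generalize dedekindEta τ = a at *
  refine mul_right_cancel₀ (pow_ne_zero 3 hc) ?_
  calc dedekindEta (3 * τ) ^ 12 * v ^ 3
      = m ^ 3 * ((m ^ 3 * ((1 + v) * (1 - 2 * v) ^ 2)) ^ 3 +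
          9 * v * m ^ 3 * (m ^ 3 * ((1 + v) * (1 - 2 * v) ^ 2)) ^ 2 +
          27 * v ^ 2 * m ^ 6 * (m ^ 3 * ((1 + v) * (1 - 2 * v) ^ 2))) := by
        rw [h2]
        ring
    _ = (27 * m ^ 9 * a ^ 3 + 9 * m ^ 6 * a ^ 6 + m ^ 3 * a ^ 9) * v ^ 3 := by
        rw [← h1]
        ring

lemma alpha_cube_sub (hτ : 0 < τ.im) :
    alpha τ ^ 3 - 27 = 729 * dedekindEta (3 * τ) ^ 12 / dedekindEta τ ^ 12 := by
  have hη := dedekindEta_ne_zero hτ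
  rw [dedekindEta_three_mul_pow_twelve hτ, alpha]
  field_simp
  ring

end ModularParametrization

/-- For `τ` in the upper half-plane: `β(τ)c(τ) = 4c(τ)³ + 1` and
`(α(τ)³ − 27)(c(τ)³ + 1)(8c(τ)³ − 1)² = 729 c(τ)³`. -/
theorem cubicCF_alpha_beta (τ : ℂ) (hτ : 0 < τ.im) :
    beta τ * c τ = 4 * c τ ^ 3 + 1 ∧
    (alpha τ ^ 3 - 27) * (c τ ^ 3 + 1) * (8 * c τ ^ 3 - 1) ^ 2 = 729 * c τ ^ 3 := by
  have hτ₃ : 0 < (τ / 3).im := by simpa using hτ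
  have hη : dedekindEta τ ≠ 0 := dedekindEta_ne_zero hτ
  have hη₃ : dedekindEta (3 * τ) ≠ 0 := dedekindEta_ne_zero (by simpa using hτ)
  have hthree : 3 * (τ / 3) = τ := mul_div_cancel₀ τ three_ne_zero
  have hnine : 9 * (τ / 3) = 3 * τ := by ring
  have hcube := dedekindEta_cube_mul_c_three_mul hτ₃
  have htwelve := dedekindEta_three_mul_pow_twelve_mul_c_cube hτ₃
  rw [hthree, hnine] at hcube htwelve
  constructor
  · rw [beta]
    field_simp
    linear_combination hcube
  · rw [alpha_cube_sub hτ]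
    field_simp
    linear_combination -htwelve
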